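/- For all ε₀* > 0 and C* > 0 there exists a constant C̃₆ > 0, depending only on ε₀* and C*, with the following property. Let N ≥ 1 (h = 1/N), let Δt > 0, and let N̂^{m+1}, N̂^m, n^{m+1}, n^m be periodic grid functions with ε₀* ≤ N̂^{m+1}(i,j,k) ≤ C* and ε₀* ≤ N̂^m(i,j,k) ≤ C* for all (i,j,k), ‖N̂^{m+1} − N̂^m‖_∞ ≤ C*·Δt, n^{m+1}(i,j,k) ≥ ε₀*/2 and n^m(i,j,k) ≥ ε₀*/2 for all (i,j,k), ‖N̂^{m+1} − n^{m+1}‖_∞ ≤ Δt, and ‖N̂^m − n^m‖_∞ ≤ Δt. Set ñ^{m+1} = N̂^{m+1} − n^{m+1} and ñ^m = N̂^m − n^m. Then ⟨ñ^{m+1} − ñ^m, G¹_{N̂^m}(N̂^{m+1}) − G¹_{n^m}(n^{m+1})⟩ ≥ (1/2)·(⟨1/N̂^{m+1}, (ñ^{m+1})²⟩ − ⟨1/N̂^m, (ñ^m)²⟩) − C̃₆·Δt·(‖ñ^{m+1}‖₂² + ‖ñ^m‖₂²). -/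

import Mathlib

open scoped BigOperators

/-- The periodic grid of indices: `(ZMod N)^3`. -/
abbrev GridIdx (N : ℕ) := ZMod N × ZMod N × ZMod N

namespace PNP

/-- Shift the first index by `a`. -/
def xsh {N : ℕ} (p : GridIdx N) (a : ZMod N) : GridIdx N := (p.1 + a, p.2.1, p.2.2)
/-- Shift the second index by `a`. -/
def ysh {N : ℕ} (p : GridIdx N) (a : ZMod N) : GridIdx N := (p.1, p.2.1 + a, p.2.2)
/-- Shift the third index by `a`. -/
def zsh {N : ℕ} (p : GridIdx N) (a : ZMod N) : GridIdx N := (p.1, p.2.1, p.2.2 + a)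

/-- Forward difference in `x`: `(D_x f)(p) = (f(p + e_x) - f(p)) / h` with `h = 1/N`. -/
noncomputable def Dx (N : ℕ) (f : GridIdx N → ℝ) : GridIdx N → ℝ :=
  fun p => (f (xsh p 1) - f p) * N
/-- Forward difference in `y`. -/
noncomputable def Dy (N : ℕ) (f : GridIdx N → ℝ) : GridIdx N → ℝ :=
  fun p => (f (ysh p 1) - f p) * N
/-- Forward difference in `z`. -/
noncomputable def Dz (N : ℕ) (f : GridIdx N → ℝ) : GridIdx N → ℝ :=
  fun p => (f (zsh p 1) - f p) * N

/-- Backward difference in `x`: `(d_x f)(p) = (f(p) - f(p - e_x)) / h`. -/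
noncomputable def dxm (N : ℕ) (f : GridIdx N → ℝ) : GridIdx N → ℝ :=
  fun p => (f p - f (xsh p (-1))) * N
/-- Backward difference in `y`. -/
noncomputable def dym (N : ℕ) (f : GridIdx N → ℝ) : GridIdx N → ℝ :=
  fun p => (f p - f (ysh p (-1))) * N
/-- Backward difference in `z`. -/
noncomputable def dzm (N : ℕ) (f : GridIdx N → ℝ) : GridIdx N → ℝ :=
  fun p => (f p - f (zsh p (-1))) * N

/-- Forward average in `x`: `(A_x f)(p) = (f(p + e_x) + f(p)) / 2`. -/
noncomputable def Ax (N : ℕ) (f : GridIdx N → ℝ) : GridIdx N → ℝ :=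
  fun p => (f (xsh p 1) + f p) / 2
/-- Forward average in `y`. -/
noncomputable def Ay (N : ℕ) (f : GridIdx N → ℝ) : GridIdx N → ℝ :=
  fun p => (f (ysh p 1) + f p) / 2
/-- Forward average in `z`. -/
noncomputable def Az (N : ℕ) (f : GridIdx N → ℝ) : GridIdx N → ℝ :=
  fun p => (f (zsh p 1) + f p) / 2

/-- The discrete Laplacian `Δ_h f = d_x(D_x f) + d_y(D_y f) + d_z(D_z f)`. -/
noncomputable def lap (N : ℕ) (f : GridIdx N → ℝ) : GridIdx N → ℝ :=
  fun p => dxm N (Dx N f) p + dym N (Dy N f) p + dzm N (Dz N f) p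

/-- The discrete inner product `⟨f, g⟩ = h³ ∑ f·g` with `h = 1/N`. -/
noncomputable def ip (N : ℕ) [NeZero N] (f g : GridIdx N → ℝ) : ℝ :=
  ((1 : ℝ) / N) ^ 3 * ∑ p : GridIdx N, f p * g p

/-- The discrete `L²` norm `‖f‖₂ = ⟨f, f⟩^{1/2}`. -/
noncomputable def l2 (N : ℕ) [NeZero N] (f : GridIdx N → ℝ) : ℝ :=
  Real.sqrt (ip N f f)

/-- The discrete maximum norm `‖f‖_∞ = max |f|`. -/
noncomputable def linf (N : ℕ) [NeZero N] (f : GridIdx N → ℝ) : ℝ :=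
  ⨆ p : GridIdx N, |f p|

/-- A grid function has zero mean if its values sum to zero. -/
def zeroMean (N : ℕ) [NeZero N] (f : GridIdx N → ℝ) : Prop :=
  ∑ p : GridIdx N, f p = 0

/-- With `F(x) = x·ln x`, the difference quotient `G¹_a(x) = (F(x) - F(a))/(x - a)`
for `x ≠ a`, with value `F'(a) = ln a + 1` at `x = a`. -/
noncomputable def G1 (a x : ℝ) : ℝ :=
  if x = a then Real.log a + 1
  else (x * Real.log x - a * Real.log a) / (x - a)

end PNP

open PNP

/-! With `F x = x log x`, `G¹_a(x)` is the first divided difference of `F`. Subtracting the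
quadratic `t² / (2c)` from `F` leaves a function whose derivative `log t + 1 - t / c` is Lipschitz
with a small constant near `c`, because `|1 / t - 1 / c| ≤ |t - c| / δ²` for `t, c ≥ δ`. Divided
differences inherit this Lipschitz bound. Writing `x = ñ^{m+1}` and `y = ñ^m`, the choice
`c = N̂^{m+1}` gives pointwise
`G¹_{N̂^m}(N̂^{m+1}) - G¹_{n^m}(n^{m+1}) = (x + y) / (2 N̂^{m+1}) + O(Δt) max(|x|, |y|)`.
Multiplying by `x - y` turns the leading term into `(x² - y²) / (2 N̂^{m+1})`, in which replacing
`1 / N̂^{m+1}` by `1 / N̂^m` in front of `y²` costs another `O(Δt) y²`. -/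

open AffineMap (lineMap)

section DividedDifference

variable {E : Type*} [NormedAddCommGroup E] [NormedSpace ℝ E] [CompleteSpace E]
  {f f' : ℝ → E} {s : Set ℝ} {a b u v : ℝ}

theorem dslope_eq_intervalIntegral_lineMap (hs : Convex ℝ s)
    (hf : ∀ t ∈ s, HasDerivAt f (f' t) t) (hf' : ContinuousOn f' s) (ha : a ∈ s) (hu : u ∈ s) :
    dslope f a u = ∫ r in (0 : ℝ)..1, f' (lineMap a u r) := by
  rcases eq_or_ne u a with rfl | hne
  · simp [(hf u ha).deriv]
  have hmem : Set.MapsTo (lineMap a u : ℝ → ℝ) (Set.Icc 0 1) s := fun _ hr =>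
    hs.lineMap_mem ha hu hr
  have hcont : ContinuousOn (fun r : ℝ => f' (lineMap a u r)) (Set.Icc 0 1) :=
    hf'.comp (by fun_prop) hmem
  have hline (r : ℝ) : lineMap a u r = a + r • (u - a) := by
    rw [AffineMap.lineMap_apply_module', add_comm]
  simp only [hline] at hcont ⊢
  have hFTC := intervalIntegral.integral_unitInterval_deriv_eq_sub hcont
    fun r hr => hf _ (hline r ▸ hmem hr)
  rw [add_sub_cancel, ← sub_smul_dslope f a u] at hFTC
  exact (smul_right_injective E (sub_ne_zero.2 hne) hFTC).symm

theorem abs_lineMap_sub_lineMap_le_max (a u b v : ℝ) {r : ℝ} (hr : r ∈ Set.Icc (0 : ℝ) 1) :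
    |lineMap a u r - lineMap b v r| ≤ max |a - b| |u - v| := by
  have hmem := (convex_closedBall (0 : ℝ) (max |a - b| |u - v|)).lineMap_mem
    (x := a - b) (y := u - v) (by simp) (by simp) hr
  rw [mem_closedBall_zero_iff, Real.norm_eq_abs] at hmem
  rwa [← vsub_eq_sub, AffineMap.lineMap_vsub_lineMap]

theorem norm_dslope_sub_dslope_le {K : NNReal} (hs : Convex ℝ s)
    (hf : ∀ t ∈ s, HasDerivAt f (f' t) t) (hf' : LipschitzOnWith K f' s)
    (ha : a ∈ s) (hu : u ∈ s) (hb : b ∈ s) (hv : v ∈ s) :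
    ‖dslope f a u - dslope f b v‖ ≤ K * max |a - b| |u - v| := by
  have hmem {x y : ℝ} (hx : x ∈ s) (hy : y ∈ s) :
      Set.MapsTo (lineMap x y : ℝ → ℝ) (Set.Icc 0 1) s := fun _ hr => hs.lineMap_mem hx hy hr
  have hint {x y : ℝ} (hx : x ∈ s) (hy : y ∈ s) :
      IntervalIntegrable (fun r : ℝ => f' (lineMap x y r)) MeasureTheory.volume 0 1 :=
    (hf'.continuousOn.comp (by fun_prop) (hmem hx hy)).intervalIntegrable_of_Icc zero_le_one
  rw [dslope_eq_intervalIntegral_lineMap hs hf hf'.continuousOn ha hu,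
    dslope_eq_intervalIntegral_lineMap hs hf hf'.continuousOn hb hv,
    ← intervalIntegral.integral_sub (hint ha hu) (hint hb hv)]
  have hbound : ∀ r ∈ Set.uIoc (0 : ℝ) 1,
      ‖f' (lineMap a u r) - f' (lineMap b v r)‖ ≤ K * max |a - b| |u - v| := by
    intro r hr
    have hr' : r ∈ Set.Icc (0 : ℝ) 1 :=
      Set.Ioc_subset_Icc_self (Set.uIoc_of_le (zero_le_one' ℝ) ▸ hr)
    calc ‖f' (lineMap a u r) - f' (lineMap b v r)‖
        ≤ K * ‖lineMap a u r - lineMap b v r‖ :=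
          hf'.norm_sub_le (hmem ha hu hr') (hmem hb hv hr')
      _ ≤ K * max |a - b| |u - v| := by
          gcongr
          exact abs_lineMap_sub_lineMap_le_max a u b v hr'
  simpa using intervalIntegral.norm_integral_le_of_norm_le_const hbound

end DividedDifference

theorem abs_inv_sub_inv_le {δ x y : ℝ} (hδ : 0 < δ) (hx : δ ≤ x) (hy : δ ≤ y) :
    |x⁻¹ - y⁻¹| ≤ |x - y| / δ ^ 2 := by
  have hx0 := hδ.trans_le hx
  have hy0 := hδ.trans_le hy
  rw [← Real.dist_eq, dist_inv_inv₀ hx0.ne' hy0.ne', Real.norm_of_nonneg hx0.le,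
    Real.norm_of_nonneg hy0.le, Real.dist_eq, sq]
  gcongr

theorem lipschitzOnWith_log_sub_div {δ R c : ℝ} (hδ : 0 < δ) (hc : δ ≤ c) :
    LipschitzOnWith (R / δ ^ 2).toNNReal (fun t => Real.log t + 1 - t / c)
      (Set.Ici δ ∩ Metric.closedBall c R) := by
  refine ((convex_Ici δ).inter (convex_closedBall c R)).lipschitzOnWith_of_nnnorm_hasDerivWithin_le
    (f' := fun t => t⁻¹ - c⁻¹) (fun t ht => ?_) fun t ht => ?_
  · have ht0 : t ≠ 0 := (hδ.trans_le ht.1).ne'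
    rw [← one_div c]
    exact (((Real.hasDerivAt_log ht0).add_const 1).sub
      ((hasDerivAt_id t).div_const c)).hasDerivWithinAt
  · rw [← norm_toNNReal]
    refine Real.toNNReal_le_toNNReal ((abs_inv_sub_inv_le hδ ht.1 hc).trans ?_)
    have htc : |t - c| ≤ R := ht.2
    gcongr

theorem abs_sub_mul_le_of_abs_le_mul_max {x y e k : ℝ} (he : |e| ≤ k * max |x| |y|) (hk : 0 ≤ k) :
    |(x - y) * e| ≤ 2 * k * (x ^ 2 + y ^ 2) := by
  have hsub : |x - y| ≤ 2 * max |x| |y| := by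
    linarith [abs_sub x y, le_max_left |x| |y|, le_max_right |x| |y|]
  have hmax : max |x| |y| ^ 2 ≤ x ^ 2 + y ^ 2 := by
    rcases max_choice |x| |y| with h | h <;> rw [h, sq_abs] <;>
      linarith [sq_nonneg x, sq_nonneg y]
  calc |(x - y) * e| = |x - y| * |e| := abs_mul _ _
    _ ≤ 2 * max |x| |y| * (k * max |x| |y|) := by gcongr
    _ = 2 * k * max |x| |y| ^ 2 := by ring
    _ ≤ 2 * k * (x ^ 2 + y ^ 2) := by gcongr

namespace PNP

section Pointwise

variable {δ R M E a b u v c : ℝ}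

theorem dslope_mul_log_sub_sq (ha : a ≠ 0) (c u : ℝ) :
    dslope (fun t => t * Real.log t - t ^ 2 / (2 * c)) a u = G1 a u - (u + a) / (2 * c) := by
  rcases eq_or_ne u a with rfl | hne
  · have hderiv := (Real.hasDerivAt_mul_log ha).sub
      ((hasDerivAt_pow 2 u).div_const (2 * c))
    rw [dslope_same, G1, if_pos rfl]
    refine hderiv.deriv.trans ?_
    norm_num
    ring
  · have hsub : u - a ≠ 0 := sub_ne_zero.2 hne
    rw [dslope_of_ne _ hne, slope_def_field, G1, if_neg hne]
    have hsq : (u + a) / (2 * c) = (u ^ 2 - a ^ 2) / (2 * c) / (u - a) := by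
      rw [eq_div_iff hsub]
      ring
    rw [hsq, ← sub_div]
    ring

theorem abs_G1_sub_G1_sub_le (hδ : 0 < δ) (hc : δ ≤ c)
    (ha : δ ≤ a) (hu : δ ≤ u) (hb : δ ≤ b) (hv : δ ≤ v)
    (hac : |a - c| ≤ R) (huc : |u - c| ≤ R) (hbc : |b - c| ≤ R) (hvc : |v - c| ≤ R) :
    |G1 a u - G1 b v - ((u - v) + (a - b)) / (2 * c)| ≤ R / δ ^ 2 * max |u - v| |a - b| := by
  have hderiv : ∀ t ∈ Set.Ici δ ∩ Metric.closedBall c R,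
      HasDerivAt (fun t => t * Real.log t - t ^ 2 / (2 * c)) (Real.log t + 1 - t / c) t := by
    intro t ht
    convert! (Real.hasDerivAt_mul_log (hδ.trans_le ht.1).ne').sub
      ((hasDerivAt_pow 2 t).div_const (2 * c)) using 1
    norm_num
    ring
  have hlip := norm_dslope_sub_dslope_le ((convex_Ici δ).inter (convex_closedBall c R)) hderiv
    (lipschitzOnWith_log_sub_div hδ hc) ⟨ha, hac⟩ ⟨hu, huc⟩ ⟨hb, hbc⟩ ⟨hv, hvc⟩
  have hR : 0 ≤ R := (abs_nonneg _).trans hac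
  rw [dslope_mul_log_sub_sq (hδ.trans_le ha).ne', dslope_mul_log_sub_sq (hδ.trans_le hb).ne',
    Real.norm_eq_abs, Real.coe_toNNReal _ (by positivity), max_comm] at hlip
  convert! hlip using 2
  ring

theorem le_sub_mul_G1_sub_G1 (hδ : 0 < δ) (ha : δ ≤ a) (hu : δ ≤ u) (hb : δ ≤ b) (hv : δ ≤ v)
    (hua : |u - a| ≤ M) (huv : |u - v| ≤ E) (hab : |a - b| ≤ E) :
    1 / 2 * (1 / u * (u - v) ^ 2 - 1 / a * (a - b) ^ 2)
        - (5 / 2 * M + 2 * E) / δ ^ 2 * ((u - v) ^ 2 + (a - b) ^ 2)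
      ≤ ((u - v) - (a - b)) * (G1 a u - G1 b v) := by
  have hM : 0 ≤ M := (abs_nonneg _).trans hua
  have hE : 0 ≤ E := (abs_nonneg _).trans huv
  have hau : |a - u| ≤ M := abs_sub_comm u a ▸ hua
  have hbu : |b - u| ≤ M + E := by
    linarith [abs_sub_le b a u, abs_sub_comm a b]
  have hvu : |v - u| ≤ M + E := by
    linarith [abs_sub_comm u v]
  have huu : |u - u| ≤ M + E := by
    rw [sub_self, abs_zero]
    positivity
  have hG1 := abs_G1_sub_G1_sub_le hδ hu ha hu hb hv (by linarith) huu hbu hvu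
  have hcross := abs_sub_mul_le_of_abs_le_mul_max hG1 (by positivity)
  have hinv : -(M / δ ^ 2) ≤ a⁻¹ - u⁻¹ :=
    (abs_le.1 ((abs_inv_sub_inv_le hδ ha hu).trans (by gcongr))).1
  generalize u - v = x at *
  generalize a - b = y at *
  generalize G1 a u - G1 b v = D at *
  have hsplit : (x - y) * D = 1 / 2 * (1 / u * x ^ 2 - 1 / a * y ^ 2)
      + 1 / 2 * ((a⁻¹ - u⁻¹) * y ^ 2) + (x - y) * (D - (x + y) / (2 * u)) := by
    ring
  calc _ ≤ 1 / 2 * (1 / u * x ^ 2 - 1 / a * y ^ 2) + 1 / 2 * (-(M / δ ^ 2) * y ^ 2)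
        + -(2 * ((M + E) / δ ^ 2) * (x ^ 2 + y ^ 2)) := by
        have hx : 0 ≤ M / δ ^ 2 * x ^ 2 := by positivity
        linear_combination 1 / 2 * hx
    _ ≤ _ := by
        rw [hsplit]
        gcongr
        exact (abs_le.1 hcross).1

end Pointwise

section Grid

variable {N : ℕ} [NeZero N]

theorem abs_apply_le_linf (f : GridIdx N → ℝ) (p : GridIdx N) : |f p| ≤ linf N f :=
  le_ciSup (f := fun p => |f p|) (Set.finite_range _).bddAbove p

theorem l2_sq (f : GridIdx N → ℝ) : l2 N f ^ 2 = (1 / N) ^ 3 * ∑ p, f p ^ 2 := by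
  have hself : ip N f f = (1 / N) ^ 3 * ∑ p, f p ^ 2 := by simp only [ip, sq]
  rw [l2, hself, Real.sq_sqrt (by positivity)]

end Grid

end PNP

theorem stmt16_general {N : ℕ} [NeZero N] {δ M E : ℝ} (hδ : 0 < δ) {Nh1 Nh0 n1 n0 : GridIdx N → ℝ}
    (hNh1 : ∀ p, δ ≤ Nh1 p) (hNh0 : ∀ p, δ ≤ Nh0 p) (hn1 : ∀ p, δ ≤ n1 p) (hn0 : ∀ p, δ ≤ n0 p)
    (hM : linf N (fun p => Nh1 p - Nh0 p) ≤ M)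
    (hE1 : linf N (fun p => Nh1 p - n1 p) ≤ E) (hE0 : linf N (fun p => Nh0 p - n0 p) ≤ E) :
    (1 / 2) * (ip N (fun p => 1 / Nh1 p) (fun p => (Nh1 p - n1 p) ^ 2)
          - ip N (fun p => 1 / Nh0 p) (fun p => (Nh0 p - n0 p) ^ 2))
        - (5 / 2 * M + 2 * E) / δ ^ 2 * ((l2 N (fun p => Nh1 p - n1 p)) ^ 2
          + (l2 N (fun p => Nh0 p - n0 p)) ^ 2)
      ≤ ip N (fun p => (Nh1 p - n1 p) - (Nh0 p - n0 p))
          (fun p => G1 (Nh0 p) (Nh1 p) - G1 (n0 p) (n1 p)) := by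
  have hpoint (p : GridIdx N) := le_sub_mul_G1_sub_G1 hδ (hNh0 p) (hNh1 p) (hn0 p) (hn1 p)
    ((abs_apply_le_linf _ p).trans hM) ((abs_apply_le_linf _ p).trans hE1)
    ((abs_apply_le_linf _ p).trans hE0)
  have hsum := mul_le_mul_of_nonneg_left (Finset.sum_le_sum fun p (_ : p ∈ Finset.univ) => hpoint p)
    (by positivity : (0 : ℝ) ≤ (1 / N) ^ 3)
  simp only [Finset.sum_sub_distrib, Finset.sum_add_distrib, ← Finset.mul_sum] at hsum
  rw [l2_sq, l2_sq]
  unfold ip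
  linear_combination hsum

/-- Refined estimate for the `G¹` nonlinear inner product with the
discrete temporal derivative of the error. -/
theorem stmt16 (ε Cs : ℝ) (hε : 0 < ε) (hCs : 0 < Cs) :
    ∃ C6 : ℝ, 0 < C6 ∧
      ∀ (N : ℕ) [NeZero N], ∀ dt : ℝ, 0 < dt →
      ∀ Nh1 Nh0 n1 n0 : GridIdx N → ℝ,
        (∀ p, ε ≤ Nh1 p ∧ Nh1 p ≤ Cs) →
        (∀ p, ε ≤ Nh0 p ∧ Nh0 p ≤ Cs) →
        linf N (fun p => Nh1 p - Nh0 p) ≤ Cs * dt →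
        (∀ p, ε / 2 ≤ n1 p) → (∀ p, ε / 2 ≤ n0 p) →
        linf N (fun p => Nh1 p - n1 p) ≤ dt →
        linf N (fun p => Nh0 p - n0 p) ≤ dt →
        (1 / 2) * (ip N (fun p => 1 / Nh1 p) (fun p => (Nh1 p - n1 p) ^ 2)
              - ip N (fun p => 1 / Nh0 p) (fun p => (Nh0 p - n0 p) ^ 2))
            - C6 * dt * ((l2 N (fun p => Nh1 p - n1 p)) ^ 2
              + (l2 N (fun p => Nh0 p - n0 p)) ^ 2)
          ≤ ip N (fun p => (Nh1 p - n1 p) - (Nh0 p - n0 p))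
              (fun p => G1 (Nh0 p) (Nh1 p) - G1 (n0 p) (n1 p)) := by
  refine ⟨(5 / 2 * Cs + 2) / (ε / 2) ^ 2, by positivity,
    fun N _ dt _ Nh1 Nh0 n1 n0 hNh1 hNh0 hM hn1 hn0 hE1 hE0 => ?_⟩
  linear_combination stmt16_general (half_pos hε) (fun p => (half_le_self hε.le).trans (hNh1 p).1)
    (fun p => (half_le_self hε.le).trans (hNh0 p).1) hn1 hn0 hM hE1 hE0
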